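/- Let r ≥ 2 be an even integer and let n ≥ 7r. If G is a θ_{r+1}-free graph on n vertices, then ρ(G) ≤ ρ(T_{n,2}), with equality if and only if G is isomorphic to the Turán graph T_{n,2}. -/

import Mathlib

open SimpleGraph Finset

attribute [local instance] Classical.propDecidable

/-- The spectral radius (largest adjacency eigenvalue) of a graph on `Fin n`. -/
noncomputable def adjSpectralRadius {n : ℕ} (G : SimpleGraph (Fin n)) : ℝ :=
  sSup (spectrum ℝ (G.adjMatrix ℝ))

/-- `G` contains a copy of `H` (a subgraph isomorphic to `H`). -/
def Contains {α β : Type*} (G : SimpleGraph α) (H : SimpleGraph β) : Prop :=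
  ∃ f : β ↪ α, ∀ a b, H.Adj a b → G.Adj (f a) (f b)

/-- The book `B_s`: `s` triangles sharing a common edge, i.e. `K_{2,s}` plus the
edge inside the part of size two. -/
def book (s : ℕ) : SimpleGraph (Fin 2 ⊕ Fin s) :=
  SimpleGraph.fromRel (fun x _ => x.isLeft = true)

/-- The theta graph `θ_{r+1} = θ(1,2,r+1)`: vertices `0,…,r+1` form a path of length
`r+1`, the edge `0 ~ (r+1)`, and vertex `r+2` is adjacent to `0` and `r+1`. -/
def theta (r : ℕ) : SimpleGraph (Fin (r + 3)) :=
  SimpleGraph.fromRel (fun x y =>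
    (x.val + 1 = y.val ∧ y.val ≤ r + 1) ∨
    (x.val = 0 ∧ y.val = r + 1) ∨
    (x.val = r + 2 ∧ (y.val = 0 ∨ y.val = r + 1)))

/-- The number of edges of a graph. -/
noncomputable def edgeCount {V : Type*} (G : SimpleGraph V) : ℕ := G.edgeSet.ncard

/-- The number of ordered pairs `(a,b) ∈ s × t` with `a ~ b`.  For disjoint `s` and `t`
this is the number `e(s,t)` of edges between `s` and `t`; for `s = t` it is `2·e(s)`. -/
noncomputable def ordPairs {V : Type*} (G : SimpleGraph V) (s t : Finset V) : ℕ :=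
  ((s ×ˢ t).filter fun p => G.Adj p.1 p.2).card

/-- The number of edges inside a vertex subset `s`. -/
noncomputable def edgesIn {V : Type*} (G : SimpleGraph V) (s : Finset V) : ℕ :=
  (G.induce (s : Set V)).edgeSet.ncard


/-- Number of neighbours of `v` in `S`. -/
noncomputable def dg {V : Type*} (G : SimpleGraph V) (S : Finset V) (v : V) : ℕ :=
  (S.filter (fun w => G.Adj v w)).card

lemma dg_le {V : Type*} (G : SimpleGraph V) (S : Finset V) (v : V) : dg G S v ≤ S.card :=
  Finset.card_filter_le _ _

lemma dg_eq_sum {V : Type*} (G : SimpleGraph V) (S : Finset V) (v : V) :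
    dg G S v = ∑ w ∈ S, if G.Adj v w then 1 else 0 := by
  rw [dg, Finset.card_filter]

lemma sum_dg_comm {V : Type*} (G : SimpleGraph V) (S T : Finset V) :
    ∑ v ∈ S, dg G T v = ∑ w ∈ T, dg G S w := by
  simp only [dg_eq_sum]
  rw [Finset.sum_comm]
  simp only [G.adj_comm]

lemma dg_insert {V : Type*} (G : SimpleGraph V) (S : Finset V) (v w : V) (hw : w ∉ S) :
    dg G (insert w S) v = (if G.Adj v w then 1 else 0) + dg G S v := by
  simp only [dg_eq_sum]
  rw [Finset.sum_insert hw]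

lemma dg_union {V : Type*} (G : SimpleGraph V) (S T : Finset V) (v : V) (h : Disjoint S T) :
    dg G (S ∪ T) v = dg G S v + dg G T v := by
  simp only [dg_eq_sum]
  rw [Finset.sum_union h]

lemma sum_dg_insert {V : Type*} (G : SimpleGraph V) (S : Finset V) (w : V) (hw : w ∉ S) :
    ∑ v ∈ insert w S, dg G (insert w S) v = ∑ v ∈ S, dg G S v + 2 * dg G S w := by
  rw [Finset.sum_insert hw]
  simp only [dg_insert G S _ w hw, Finset.sum_add_distrib]
  have : ∑ v ∈ S, (if G.Adj v w then 1 else 0) = dg G S w := by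
    rw [dg_eq_sum]; simp only [G.adj_comm]
  rw [this]
  simp
  ring

lemma exists_longest {V : Type*} (P : List V → Prop) (k : ℕ) (h0 : ∃ L, P L)
    (hb : ∀ L, P L → L.length ≤ k) : ∃ L, P L ∧ ∀ L', P L' → L'.length ≤ L.length := by
  obtain ⟨L0, hL0⟩ := h0
  let Q : ℕ → Prop := fun m => ∃ L, P L ∧ L.length = m
  have hQ : Q (Nat.findGreatest Q k) :=
    Nat.findGreatest_spec (P := Q) (hb L0 hL0) ⟨L0, hL0, rfl⟩
  obtain ⟨L, hL, hLl⟩ := hQ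
  refine ⟨L, hL, fun L' hL' => ?_⟩
  rw [hLl]
  exact Nat.le_findGreatest (hb L' hL') ⟨L', hL', rfl⟩

lemma cycle_extend {V : Type*} (G : SimpleGraph V) (c : List V) (hn : c.Nodup)
    (hc : c.IsChain G.Adj) (hcl : ∀ x ∈ c.getLast?, ∀ y ∈ c.head?, G.Adj x y)
    (w y : V) (hw : w ∉ c) (hy : y ∈ c) (hwy : G.Adj w y) :
    ∃ p : List V, p.Nodup ∧ p.IsChain G.Adj ∧ (∀ v ∈ p, v = w ∨ v ∈ c) ∧
      p.length = c.length + 1 := by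
  obtain ⟨s, t, rfl⟩ := List.append_of_mem hy
  refine ⟨w :: ((y :: t) ++ s), ?_, ?_, ?_, ?_⟩
  · rw [List.nodup_cons]
    refine ⟨?_, ?_⟩
    · intro h; apply hw; simp at h ⊢; tauto
    · exact List.nodup_append_comm.1 hn
  · rw [List.isChain_append] at hc
    have h1 : ((y :: t) ++ s).IsChain G.Adj := by
      rw [List.isChain_append]
      refine ⟨hc.2.1, hc.1, ?_⟩
      intro a ha b hb
      apply hcl
      · simpa using ha
      · cases s with
        | nil => simp at hb
        | cons s0 s => simpa using hb
    rw [List.cons_append] at h1 ⊢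
    exact List.IsChain.cons_cons hwy h1
  · intro v hv; simp at hv ⊢; tauto
  · simp; omega

lemma nbr_in_path {V : Type*} (G : SimpleGraph V) (S : Finset V) (v : V) (t : List V)
    (hL : (v :: t).Nodup ∧ (v :: t).IsChain G.Adj ∧ ∀ x ∈ v :: t, x ∈ S)
    (hmax : ∀ L' : List V, (L'.Nodup ∧ L'.IsChain G.Adj ∧ ∀ x ∈ L', x ∈ S) →
      L'.length ≤ (v :: t).length) (w : V) (hw : w ∈ S) (hvw : G.Adj v w) : w ∈ v :: t := by
  by_contra hcon
  have := hmax (w :: v :: t) ⟨List.nodup_cons.2 ⟨hcon, hL.1⟩,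
    List.IsChain.cons_cons hvw.symm hL.2.1, by
      intro x hx
      rcases List.mem_cons.1 hx with rfl | hx
      · exact hw
      · exact hL.2.2 x hx⟩
  simp at this

lemma erdos_gallai {V : Type*} (G : SimpleGraph V) (k : ℕ) : ∀ (m : ℕ) (S : Finset V),
    S.card ≤ m →
    (∀ L : List V, (L.Nodup ∧ L.IsChain G.Adj ∧ ∀ v ∈ L, v ∈ S) → L.length ≤ k + 1) →
    ∑ v ∈ S, dg G S v ≤ k * S.card := by
  intro m
  induction m with
  | zero =>
    intro S hS _
    have : S = ∅ := by simpa using hS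
    simp [this]
  | succ m ih =>
    intro S hS hfree
    rcases S.eq_empty_or_nonempty with rfl | ⟨s0, hs0⟩
    · simp
    -- removal of a low degree vertex
    have hrem : ∀ v ∈ S, 2 * dg G S v ≤ k → ∑ v ∈ S, dg G S v ≤ k * S.card := by
      intro v hv hd
      have hvn : v ∉ S.erase v := by simp
      have hins : insert v (S.erase v) = S := Finset.insert_erase hv
      have h1 := sum_dg_insert G (S.erase v) v hvn
      rw [hins] at h1
      have h2 := ih (S.erase v) (by rw [Finset.card_erase_of_mem hv]; omega) (by
        intro L hL
        exact hfree L ⟨hL.1, hL.2.1, fun x hx => Finset.mem_of_mem_erase (hL.2.2 x hx)⟩)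
      have h3 : dg G S v = dg G (S.erase v) v := by
        conv_lhs => rw [← hins, dg_insert G _ _ _ hvn]
        simp
      have h4 : S.card = (S.erase v).card + 1 := by
        rw [Finset.card_erase_of_mem hv]; have := Finset.card_pos.2 ⟨v, hv⟩; omega
      rw [h1, h4]
      rw [h3] at hd
      linarith
    obtain ⟨L, hL, hmax⟩ := exists_longest
      (fun L : List V => L.Nodup ∧ L.IsChain G.Adj ∧ ∀ v ∈ L, v ∈ S) (k + 1)
      ⟨[], by simp⟩ hfree
    have hLpos : 1 ≤ L.length := by
      have := hmax [s0] (by simp [hs0])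
      simpa using this
    by_contra hcon
    have hbig : ∀ v ∈ S, k + 1 ≤ 2 * dg G S v := by
      intro v hv
      by_contra h
      exact hcon (hrem v hv (by omega))
    have hlk := hfree L hL
    set l := L.length with hl
    have hrevL : L.reverse.Nodup ∧ L.reverse.IsChain G.Adj ∧ ∀ v ∈ L.reverse, v ∈ S := by
      refine ⟨List.nodup_reverse.2 hL.1, ?_, ?_⟩
      · rw [List.isChain_reverse]
        exact hL.2.1.imp (fun a b h => h.symm)
      · intro v hv; exact hL.2.2 v (List.mem_reverse.1 hv)
    -- first vertex
    set f : ℕ → V := fun i => L.getD i s0 with hf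
    have hfi : ∀ i (h : i < l), f i = L[i] := by
      intro i h; exact List.getD_eq_getElem L s0 h
    have hmem : ∀ w ∈ L, ∃ i, i < l ∧ f i = w := by
      intro w hw
      obtain ⟨i, h, rfl⟩ := List.getElem_of_mem hw
      exact ⟨i, h, hfi i h⟩
    have hn1 : ∀ w ∈ S, G.Adj (f 0) w → w ∈ L := by
      intro w hw hadj
      cases hLc : L with
      | nil => simp [hl, hLc] at hLpos
      | cons a t =>
        have : f 0 = a := by simp [hf, hLc]
        rw [this] at hadj
        exact nbr_in_path G S a t (hLc ▸ hL) (by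
          intro L' h'; have := hmax L' h'; rw [hl, hLc] at this; exact this) w hw hadj
    have hn2 : ∀ w ∈ S, G.Adj (f (l - 1)) w → w ∈ L := by
      intro w hw hadj
      cases hLc : L.reverse with
      | nil => simp at hLc; simp [hl, hLc] at hLpos
      | cons a t =>
        have : f (l - 1) = a := by
          rw [hfi (l-1) (by omega)]
          have h0 : L.reverse[0]? = some a := by rw [hLc]; simp
          rw [List.getElem?_reverse (by omega)] at h0
          rw [List.getElem?_eq_getElem (by omega)] at h0
          simpa [hl] using h0
        rw [this] at hadj
        have := nbr_in_path G S a t (hLc ▸ hrevL) (by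
          intro L' h'; have := hmax L' h'; rw [← hLc, List.length_reverse]; exact this) w hw hadj
        rw [← hLc] at this
        simpa using this
    have hf0S : f 0 ∈ S := by rw [hfi 0 (by omega)]; exact hL.2.2 _ (List.getElem_mem _)
    have hflS : f (l-1) ∈ S := by rw [hfi _ (by omega)]; exact hL.2.2 _ (List.getElem_mem _)
    let I1 := (Finset.range (l-1)).filter (fun i => G.Adj (f 0) (f (i+1)))
    let I2 := (Finset.range (l-1)).filter (fun i => G.Adj (f (l-1)) (f i))
    have hI1 : dg G S (f 0) ≤ I1.card := by
      have : S.filter (fun w => G.Adj (f 0) w) ⊆ I1.image (fun i => f (i+1)) := by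
        intro w hw
        rw [Finset.mem_filter] at hw
        obtain ⟨i, hi, rfl⟩ := hmem w (hn1 w hw.1 hw.2)
        cases i with
        | zero => exact absurd hw.2 (G.irrefl)
        | succ i =>
          rw [Finset.mem_image]
          exact ⟨i, by simp only [I1, Finset.mem_filter, Finset.mem_range]; exact ⟨by omega, hw.2⟩, rfl⟩
      exact (Finset.card_le_card this).trans Finset.card_image_le
    have hI2 : dg G S (f (l-1)) ≤ I2.card := by
      have : S.filter (fun w => G.Adj (f (l-1)) w) ⊆ I2.image (fun i => f i) := by
        intro w hw
        rw [Finset.mem_filter] at hw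
        obtain ⟨i, hi, rfl⟩ := hmem w (hn2 w hw.1 hw.2)
        by_cases hil : i = l - 1
        · subst hil; exact absurd hw.2 (G.irrefl)
        · rw [Finset.mem_image]
          exact ⟨i, by simp only [I2, Finset.mem_filter, Finset.mem_range]; exact ⟨by omega, hw.2⟩, rfl⟩
      exact (Finset.card_le_card this).trans Finset.card_image_le
    have hne : (I1 ∩ I2).Nonempty := by
      rw [← Finset.card_pos]
      have h1 := Finset.card_union_add_card_inter I1 I2
      have h2 : (I1 ∪ I2).card ≤ l - 1 := by
        have : I1 ∪ I2 ⊆ Finset.range (l-1) :=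
          Finset.union_subset (Finset.filter_subset _ _) (Finset.filter_subset _ _)
        simpa using Finset.card_le_card this
      have h3 := hbig _ hf0S
      have h4 := hbig _ hflS
      omega
    obtain ⟨i, hi⟩ := hne
    simp only [I1, I2, Finset.mem_inter, Finset.mem_filter, Finset.mem_range] at hi
    obtain ⟨⟨hil, hi1⟩, -, hi2⟩ := hi
    set l1 := L.take (i+1) with hl1
    set l2 := L.drop (i+1) with hl2
    have hL12 : l1 ++ l2 = L := List.take_append_drop _ _
    have hperm : (l1.reverse ++ l2).Perm L := by
      conv_rhs => rw [← hL12]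
      exact (List.reverse_perm l1).append_right l2
    have hl1h : l1.head? = some (f 0) := by
      rw [hl1, List.head?_take, hfi 0 (by omega), List.head?_eq_getElem?,
        List.getElem?_eq_getElem (by omega)]
      simp
    have hl1l : l1.getLast? = some (f i) := by
      rw [hl1, List.getLast?_take, hfi i (by omega)]
      simp
    have hl2h : l2.head? = some (f (i+1)) := by
      rw [hl2, List.head?_drop, hfi (i+1) (by omega), List.getElem?_eq_getElem (by omega)]
    have hl2l : l2.getLast? = some (f (l-1)) := by
      rw [hl2, List.getLast?_drop, hfi (l-1) (by omega), if_neg (by omega),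
        List.getLast?_eq_getElem?, List.getElem?_eq_getElem (by omega)]
    have hch := hL.2.1
    rw [← hL12, List.isChain_append] at hch
    have hcc : (l1.reverse ++ l2).IsChain G.Adj := by
      rw [List.isChain_append]
      refine ⟨?_, hch.2.1, ?_⟩
      · rw [List.isChain_reverse]; exact hch.1.imp (fun a b h => h.symm)
      · intro x hx y hy
        rw [List.getLast?_reverse, hl1h] at hx
        rw [hl2h] at hy
        simp at hx hy
        rw [← hx, ← hy]; exact hi1
    have hcl : ∀ x ∈ (l1.reverse ++ l2).getLast?, ∀ y ∈ (l1.reverse ++ l2).head?, G.Adj x y := by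
      intro x hx y hy
      rw [List.getLast?_append, hl2l] at hx
      rw [List.head?_append, List.head?_reverse, hl1l] at hy
      simp at hx hy
      rw [← hx, ← hy]; exact hi2
    -- no edges leaving the path
    have hclosed : ∀ y ∈ L, ∀ w ∈ S, G.Adj y w → w ∈ L := by
      intro y hy w hw hyw
      by_contra hwL
      obtain ⟨p, hp1, hp2, hp3, hp4⟩ := cycle_extend G (l1.reverse ++ l2)
        (hperm.nodup_iff.2 hL.1) hcc hcl w y (fun h => hwL (hperm.mem_iff.1 h))
        (hperm.mem_iff.2 hy) hyw.symm
      have := hmax p ⟨hp1, hp2, fun v hv => by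
        rcases hp3 v hv with rfl | h
        · exact hw
        · exact hL.2.2 v (hperm.mem_iff.1 h)⟩
      rw [hp4, hperm.length_eq] at this
      omega
    set P := L.toFinset with hP
    have hPc : P.card = l := List.toFinset_card_of_nodup hL.1
    have hPS : P ⊆ S := by intro v hv; exact hL.2.2 v (List.mem_toFinset.1 hv)
    have hdisj : Disjoint P (S \ P) := Finset.disjoint_sdiff
    have hPU : P ∪ (S \ P) = S := Finset.union_sdiff_of_subset hPS
    have hIH := ih (S \ P) (by rw [Finset.card_sdiff_of_subset hPS]; omega) (by
      intro L' hL'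
      exact hfree L' ⟨hL'.1, hL'.2.1, fun x hx => (Finset.mem_sdiff.1 (hL'.2.2 x hx)).1⟩)
    have hsum : ∑ v ∈ S, dg G S v = ∑ v ∈ P, dg G S v + ∑ v ∈ S \ P, dg G S v := by
      rw [← Finset.sum_union hdisj, hPU]
    have hA : ∑ v ∈ P, dg G S v ≤ P.card * k := by
      rw [← smul_eq_mul]
      apply Finset.sum_le_card_nsmul
      intro v hv
      have : S.filter (fun w => G.Adj v w) ⊆ P.erase v := by
        intro w hw
        rw [Finset.mem_filter] at hw
        rw [Finset.mem_erase]
        exact ⟨fun h => G.irrefl (h ▸ hw.2),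
          List.mem_toFinset.2 (hclosed v (List.mem_toFinset.1 hv) w hw.1 hw.2)⟩
      have h2 := Finset.card_le_card this
      rw [Finset.card_erase_of_mem hv] at h2
      unfold dg
      omega
    have hB : ∑ v ∈ S \ P, dg G S v = ∑ v ∈ S \ P, dg G (S \ P) v := by
      apply Finset.sum_congr rfl
      intro v hv
      rw [Finset.mem_sdiff] at hv
      unfold dg
      congr 1
      ext w
      simp only [Finset.mem_filter, Finset.mem_sdiff]
      constructor
      · rintro ⟨h1, h2⟩
        refine ⟨⟨h1, fun h => hv.2 ?_⟩, h2⟩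
        exact List.mem_toFinset.2 (hclosed w (List.mem_toFinset.1 h) v hv.1 h2.symm)
      · rintro ⟨⟨h1, _⟩, h2⟩; exact ⟨h1, h2⟩
    have hcard : S.card = P.card + (S \ P).card := by
      rw [← Finset.card_union_of_disjoint hdisj, hPU]
    apply hcon
    rw [hsum, hB, hcard]
    linarith

lemma sum_dg_le_mul {V : Type*} (G : SimpleGraph V) (X Y : Finset V) :
    ∑ x ∈ X, dg G Y x ≤ X.card * Y.card := by
  rw [← smul_eq_mul]
  exact Finset.sum_le_card_nsmul _ _ _ (fun v _ => dg_le G Y v)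

/-- Greedy alternating path. -/
lemma greedy_path {V : Type*} (G : SimpleGraph V) (k : ℕ) (X Y : Finset V)
    (hd : Disjoint X Y) (hX : X.Nonempty)
    (h1 : ∀ x ∈ X, k ≤ dg G Y x) (h2 : ∀ y ∈ Y, k ≤ dg G X y) :
    ∀ i, i + 1 ≤ k → ∃ (x y : V) (p : List V), (x :: p).Nodup ∧ (x :: p).IsChain G.Adj ∧
      x ∈ X ∧ (x :: p).getLast? = some y ∧ y ∈ Y ∧
      (∀ v ∈ x :: p, v ∈ X ∨ v ∈ Y) ∧ (x :: p).length = 2 * (i + 1) ∧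
      ((x :: p).filter (fun v => decide (v ∈ X))).length = i + 1 ∧
      ((x :: p).filter (fun v => decide (v ∈ Y))).length = i + 1 := by
  have hXY : ∀ v, v ∈ X → v ∉ Y := fun v hv hv' => Finset.disjoint_left.1 hd hv hv'
  have hYX : ∀ v, v ∈ Y → v ∉ X := fun v hv hv' => Finset.disjoint_left.1 hd hv' hv
  have hext : ∀ (S : Finset V) (v : V) (L : List V), k ≤ dg G S v →
      (L.filter (fun v => decide (v ∈ S))).length < k → ∃ w ∈ S, G.Adj v w ∧ w ∉ L := by
    intro S v L hk hlt
    by_contra hcon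
    push Not at hcon
    have hsub : S.filter (fun w => G.Adj v w) ⊆ (L.filter (fun v => decide (v ∈ S))).toFinset := by
      intro w hw
      rw [Finset.mem_filter] at hw
      rw [List.mem_toFinset, List.mem_filter]
      exact ⟨hcon w hw.1 hw.2, by simpa using hw.1⟩
    have := (Finset.card_le_card hsub).trans (List.toFinset_card_le _)
    unfold dg at hk
    omega
  intro i
  induction i with
  | zero =>
    intro hk
    obtain ⟨x, hx⟩ := hX
    obtain ⟨y, hy, hxy, -⟩ := hext Y x [] (h1 x hx) (by simp; omega)
    refine ⟨x, y, [y], ?_, ?_, hx, by simp, hy, ?_, by simp, ?_, ?_⟩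
    · simp [hxy.ne]
    · simp [hxy]
    · intro v hv; simp at hv; rcases hv with rfl | rfl <;> simp [*]
    · simp [hx, hYX y hy]
    · simp [hy, hXY x hx]
  | succ i ih =>
    intro hk
    obtain ⟨x, y, p, hn, hc, hx, hl, hy, hm, hlen, hfx, hfy⟩ := ih (by omega)
    obtain ⟨y', hy', hxy', hny'⟩ := hext Y x (x :: p) (h1 x hx) (by omega)
    obtain ⟨x', hx', hyx', hnx'⟩ := hext X y' (x :: p) (h2 y' hy') (by omega)
    refine ⟨x', y, y' :: x :: p, ?_, ?_, hx', ?_, hy, ?_, ?_, ?_, ?_⟩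
    · rw [List.nodup_cons, List.nodup_cons]
      refine ⟨?_, hny', hn⟩
      rw [List.mem_cons]
      rintro (h | h)
      · exact hXY x' hx' (h ▸ hy')
      · exact hnx' h
    · exact List.IsChain.cons_cons hyx'.symm (List.IsChain.cons_cons hxy'.symm hc)
    · simpa [List.getLast?_cons_cons] using hl
    · intro v hv
      rw [List.mem_cons, List.mem_cons] at hv
      rcases hv with rfl | rfl | hv
      · exact Or.inl hx'
      · exact Or.inr hy'
      · exact hm v hv
    · simp at hlen ⊢; omega
    · rw [List.filter_cons_of_pos (by simpa using hx'),
        List.filter_cons_of_neg (by simpa using hYX y' hy'), List.length_cons, hfx]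
    · rw [List.filter_cons_of_neg (by simpa using hXY x' hx'),
        List.filter_cons_of_pos (by simpa using hy'), List.length_cons, hfy]

/-- Bipartite graph without alternating path on `2k+2` vertices has at most `k (|X|+|Y|)` edges. -/
lemma bip_bound {V : Type*} (G : SimpleGraph V) (k : ℕ) : ∀ (m : ℕ) (X Y : Finset V),
    X.card + Y.card ≤ m → Disjoint X Y →
    (∀ (x y : V) (p : List V), (x :: p).Nodup → (x :: p).IsChain G.Adj →
      x ∈ X → (x :: p).getLast? = some y → y ∈ Y →
      (∀ v ∈ x :: p, v ∈ X ∨ v ∈ Y) → (x :: p).length = 2 * (k + 1) → False) →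
    ∑ x ∈ X, dg G Y x ≤ k * (X.card + Y.card) := by
  intro m
  induction m with
  | zero =>
    intro X Y h _ _
    have : X = ∅ := by rw [← Finset.card_eq_zero]; omega
    simp [this]
  | succ m ih =>
    intro X Y hm hd hfree
    rcases X.eq_empty_or_nonempty with rfl | hXne
    · simp
    by_cases h1 : ∀ x ∈ X, k + 1 ≤ dg G Y x
    · by_cases h2 : ∀ y ∈ Y, k + 1 ≤ dg G X y
      · obtain ⟨x, y, p, hn, hc, hx, hl, hy, hm, hlen, -, -⟩ :=
          greedy_path G (k+1) X Y hd hXne h1 h2 k le_rfl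
        exact (hfree x y p hn hc hx hl hy hm hlen).elim
      · push Not at h2
        obtain ⟨y, hy, hlt⟩ := h2
        have hI := ih X (Y.erase y) (by
          rw [Finset.card_erase_of_mem hy]; have := Finset.card_pos.2 ⟨y, hy⟩; omega)
          (hd.mono_right (Finset.erase_subset _ _)) (by
            intro x y' p a1 a2 a3 a4 a5 a6 a7
            refine hfree x y' p a1 a2 a3 a4 (Finset.mem_of_mem_erase a5) ?_ a7
            intro v hv
            exact (a6 v hv).imp id Finset.mem_of_mem_erase)
        rw [sum_dg_comm] at hI ⊢
        have hs := Finset.add_sum_erase Y (fun w => dg G X w) hy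
        have hc : Y.card = (Y.erase y).card + 1 := by
          rw [Finset.card_erase_of_mem hy]; have := Finset.card_pos.2 ⟨y, hy⟩; omega
        rw [← hs, hc]
        linarith
    · push Not at h1
      obtain ⟨x, hx, hlt⟩ := h1
      have hI := ih (X.erase x) Y (by
        rw [Finset.card_erase_of_mem hx]; have := Finset.card_pos.2 ⟨x, hx⟩; omega)
        (hd.mono_left (Finset.erase_subset _ _)) (by
          intro x' y' p a1 a2 a3 a4 a5 a6 a7
          refine hfree x' y' p a1 a2 (Finset.mem_of_mem_erase a3) a4 a5 ?_ a7
          intro v hv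
          exact (a6 v hv).imp Finset.mem_of_mem_erase id)
      have hs := Finset.add_sum_erase X (fun w => dg G Y w) hx
      have hc : X.card = (X.erase x).card + 1 := by
        rw [Finset.card_erase_of_mem hx]; have := Finset.card_pos.2 ⟨x, hx⟩; omega
      rw [← hs, hc]
      linarith

lemma theta_of_list {V : Type*} (G : SimpleGraph V) (r : ℕ) (L : List V) (w a b : V)
    (hlen : L.length = r + 2) (hn : L.Nodup) (hc : L.IsChain G.Adj) (hw : w ∉ L)
    (ha : L.head? = some a) (hb : L.getLast? = some b)
    (hab : G.Adj a b) (hwa : G.Adj w a) (hwb : G.Adj w b) : Contains G (theta r) := by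
  have hn' : (L ++ [w]).Nodup := by
    rw [List.nodup_append]
    refine ⟨hn, by simp, ?_⟩
    intro x hx y hy
    simp at hy
    subst hy
    rintro rfl
    exact hw hx
  have hlen' : (L ++ [w]).length = r + 3 := by simp [hlen]
  let f : Fin (r+3) → V := fun i => (L ++ [w])[i.val]'(by rw [hlen']; exact i.2)
  have hfinj : Function.Injective f := by
    intro i j hij
    exact Fin.ext ((List.Nodup.getElem_inj_iff hn').1 hij)
  have h0 : ∀ i : Fin (r+3), i.val = 0 → f i = a := by
    intro i hi
    have : L[0] = a := by
      rw [List.head?_eq_getElem?, List.getElem?_eq_getElem (by omega)] at ha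
      simpa using ha
    simp only [f, hi]
    rw [List.getElem_append_left (by omega)]
    exact this
  have h1 : ∀ i : Fin (r+3), i.val = r + 1 → f i = b := by
    intro i hi
    have : L[r+1] = b := by
      rw [List.getLast?_eq_getElem?, List.getElem?_eq_getElem (by omega)] at hb
      simpa [hlen] using hb
    simp only [f, hi]
    rw [List.getElem_append_left (by omega)]
    exact this
  have h2 : ∀ i : Fin (r+3), i.val = r + 2 → f i = w := by
    intro i hi
    simp only [f, hi]
    rw [List.getElem_append_right (by omega)]
    simp
  have key : ∀ i j : Fin (r+3), ((i.val + 1 = j.val ∧ j.val ≤ r + 1) ∨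
    (i.val = 0 ∧ j.val = r + 1) ∨
    (i.val = r + 2 ∧ (j.val = 0 ∨ j.val = r + 1))) → G.Adj (f i) (f j) := by
    rintro i j (⟨hij, hj⟩ | ⟨hi, hj⟩ | ⟨hi, hj | hj⟩)
    · simp only [f, ← hij]
      rw [List.getElem_append_left (by omega), List.getElem_append_left (by omega)]
      exact List.isChain_iff_getElem.1 hc i.val (by omega)
    · rw [h0 i hi, h1 j hj]; exact hab
    · rw [h2 i hi, h0 j hj]; exact hwa
    · rw [h2 i hi, h1 j hj]; exact hwb
  refine ⟨⟨f, hfinj⟩, ?_⟩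
  intro i j hij
  rw [theta, SimpleGraph.fromRel_adj] at hij
  rcases hij.2 with h | h
  · exact key i j h
  · exact (key j i h).symm

lemma numeric (k n α β N F : ℕ) (hk : 1 ≤ k) (hn : 14 * k ≤ n) (hα : 2 ≤ α)
    (hαβ : α + β + 1 = n) (hN : N ≤ β) (hF : n * n ≤ 4 * F + 1)
    (h1 : F ≤ α * (1 + 2 * k + N))
    (h2 : F ≤ α * (1 + 2 * k) + 2 * N + (α - 2) * (β - N) + (k - 1) * (N + (α - 2))) :
    False := by
  have hk0 := hk
  have hα0 := hα
  have hN0 := hN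
  zify [hα, hN, hk] at hn hαβ hF h1 h2
  zify at hk0 hα0 hN0
  clear hk hα hN
  rename' hk0 => hk, hα0 => hα, hN0 => hN
  rw [← hαβ] at hn hF
  set K : ℤ := (k : ℤ)
  set a : ℤ := (α : ℤ)
  set b : ℤ := (β : ℤ)
  set t : ℤ := (N : ℤ)
  set f : ℤ := (F : ℤ)
  have hb : 0 ≤ b := by positivity
  have ht : 0 ≤ t := by positivity
  obtain ⟨n, hndef⟩ : ∃ n : ℤ, n = a + b + 1 := ⟨_, rfl⟩
  rw [← hndef] at hn hF
  have p1 : 0 ≤ (n - 14 * K) * n := mul_nonneg (by linarith) (by linarith)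
  rcases eq_or_lt_of_le hN with h | h
  · rw [h] at h2
    have e : b = n - 1 - a := by linarith
    rw [e] at h2
    have p2 : 0 ≤ (n - 1 - a) * (2 * K - 1) := mul_nonneg (by linarith) (by linarith)
    have p3 : 0 ≤ (n - 14) * K := mul_nonneg (by linarith) (by linarith)
    nlinarith
  · have h' : t ≤ b - 1 := by omega
    have p2 : 0 ≤ (K + 3) * (b - 1 - t) := mul_nonneg (by linarith) (by linarith)
    have p3 : 0 ≤ (n - 14 * K) * (2 * K - 2) := mul_nonneg (by linarith) (by linarith)
    have e : b = n - 1 - a := by linarith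
    rw [e] at h2 p2
    have p4 := sq_nonneg (2 * a - (n + 4 * K - 1))
    have p5 : 0 ≤ (K-1)*(K-1) := mul_self_nonneg _
    nlinarith

/-- Neighbourhood of `u` as a finset. -/
noncomputable def nA {V : Type*} [Fintype V] (G : SimpleGraph V) (u : V) : Finset V :=
  Finset.univ.filter (fun v => G.Adj u v)

/-- Non-neighbours of `u` other than `u`. -/
noncomputable def nB {V : Type*} [Fintype V] (G : SimpleGraph V) (u : V) : Finset V :=
  Finset.univ.filter (fun v => v ≠ u ∧ ¬ G.Adj u v)

section core
variable {V : Type*} [Fintype V] (G : SimpleGraph V) (u : V)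

lemma mem_nA (v : V) : v ∈ nA G u ↔ G.Adj u v := by simp [nA]
lemma mem_nB (v : V) : v ∈ nB G u ↔ v ≠ u ∧ ¬ G.Adj u v := by simp [nB]

lemma disj_AB : Disjoint (nA G u) (nB G u) := by
  rw [Finset.disjoint_left]
  intro v h1 h2
  exact ((mem_nB G u v).1 h2).2 ((mem_nA G u v).1 h1)

lemma u_notMem : u ∉ nA G u ∪ nB G u := by
  simp [mem_nA, mem_nB]

lemma univ_eq : (Finset.univ : Finset V) = insert u (nA G u ∪ nB G u) := by
  ext v
  simp [mem_nA, mem_nB]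
  tauto

lemma card_AB : (nA G u).card + (nB G u).card + 1 = Fintype.card V := by
  rw [← Finset.card_univ, univ_eq G u, Finset.card_insert_of_notMem (u_notMem G u),
    Finset.card_union_of_disjoint (disj_AB G u)]

lemma dg_univ_eq (v : V) (hv : v ∈ nA G u) :
    dg G Finset.univ v = 1 + dg G (nA G u) v + dg G (nB G u) v := by
  rw [univ_eq G u, dg_insert G _ _ _ (u_notMem G u), dg_union G _ _ _ (disj_AB G u),
    if_pos ((mem_nA G u v).1 hv).symm]
  ring

lemma sum_dg_univ : ∑ v ∈ nA G u, dg G Finset.univ v =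
    (nA G u).card + ∑ v ∈ nA G u, dg G (nA G u) v + ∑ v ∈ nA G u, dg G (nB G u) v := by
  rw [Finset.sum_congr rfl (fun v hv => dg_univ_eq G u v hv)]
  simp [Finset.sum_add_distrib]

lemma path_in_nbhd (r : ℕ) (hfree : ¬ Contains G (theta r)) (L : List V) (hn : L.Nodup)
    (hc : L.IsChain G.Adj) (hL : ∀ v ∈ L, v ∈ nA G u) : L.length ≠ r + 2 := by
  intro hlen
  apply hfree
  match L, hn, hc, hL, hlen with
  | [], _, _, _, hlen => simp at hlen
  | [_], _, _, _, hlen => simp at hlen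
  | w :: a :: t, hn, hc, hL, hlen =>
    have huL : u ∉ w :: a :: t := fun h => G.irrefl ((mem_nA G u u).1 (hL u h))
    rw [List.isChain_cons_cons] at hc
    have hadj : ∀ v ∈ w :: a :: t, G.Adj u v := fun v hv => (mem_nA G u v).1 (hL v hv)
    refine theta_of_list G r ((a :: t) ++ [u]) w a u ?_ ?_ ?_ ?_ ?_ ?_ ?_ ?_ ?_
    · simpa using hlen
    · rw [List.nodup_append]
      refine ⟨(List.nodup_cons.1 hn).2, by simp, ?_⟩
      intro x hx y hy
      simp at hy
      subst hy
      rintro rfl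
      exact huL (List.mem_cons_of_mem _ hx)
    · rw [List.isChain_append]
      refine ⟨hc.2, by simp, ?_⟩
      intro x hx y hy
      simp at hy
      subst hy
      exact (hadj x (List.mem_cons_of_mem _ (List.mem_of_getLast? hx))).symm
    · intro h
      rw [List.mem_append] at h
      rcases h with h | h
      · exact (List.nodup_cons.1 hn).1 h
      · simp at h; subst h; exact huL (by simp)
    · simp
    · rw [List.getLast?_append]; simp
    · exact (hadj a (by simp)).symm
    · exact hc.1
    · exact (hadj w (by simp)).symm

lemma path_bound (r : ℕ) (hfree : ¬ Contains G (theta r)) (L : List V) (hn : L.Nodup)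
    (hc : L.IsChain G.Adj) (hL : ∀ v ∈ L, v ∈ nA G u) : L.length ≤ r + 1 := by
  by_contra h
  refine path_in_nbhd G u r hfree (L.take (r+2)) (hn.sublist (List.take_sublist _ _))
    (hc.take _) (fun v hv => hL v (List.mem_of_mem_take hv)) ?_
  rw [List.length_take]; omega

lemma core (k : ℕ) (hk : 1 ≤ k) (hn : 14 * k ≤ Fintype.card V)
    (hfree : ¬ Contains G (theta (2 * k))) (v0 : V) (hv0 : v0 ∈ nA G u)
    (hv0d : 0 < dg G (nA G u) v0) :
    ∑ v ∈ nA G u, dg G Finset.univ v < Fintype.card V * Fintype.card V / 4 := by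
  set n := Fintype.card V with hndef
  rw [sum_dg_univ]
  have hcard : (nA G u).card + (nB G u).card + 1 = n := card_AB G u
  set A := nA G u with hA
  set B := nB G u with hB
  set P := A.filter (fun v => 0 < dg G A v) with hP
  have hPA : P ⊆ A := Finset.filter_subset _ _
  have hv0P : v0 ∈ P := Finset.mem_filter.2 ⟨hv0, hv0d⟩
  obtain ⟨a1, ha1, hmax⟩ := Finset.exists_max_image P (fun v => dg G B v) ⟨v0, hv0P⟩
  set N := dg G B a1 with hN
  have hPpos : 0 < P.card := Finset.card_pos.2 ⟨v0, hv0P⟩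
  have hPle := Finset.card_le_card hPA
  -- edges inside A
  have hEA : ∑ v ∈ A, dg G A v ≤ 2 * k * P.card := by
    have h1 : ∑ v ∈ A, dg G A v = ∑ v ∈ P, dg G A v := by
      symm
      apply Finset.sum_subset hPA
      intro v hv hvP
      by_contra h
      exact hvP (Finset.mem_filter.2 ⟨hv, Nat.pos_of_ne_zero h⟩)
    have h2 : ∑ v ∈ P, dg G A v = ∑ v ∈ P, dg G P v := by
      apply Finset.sum_congr rfl
      intro v hv
      unfold dg
      congr 1
      ext w
      simp only [Finset.mem_filter]
      constructor
      · rintro ⟨hw, hvw⟩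
        refine ⟨Finset.mem_filter.2 ⟨hw, ?_⟩, hvw⟩
        exact Finset.card_pos.2 ⟨v, Finset.mem_filter.2 ⟨hPA hv, hvw.symm⟩⟩
      · rintro ⟨hw, hvw⟩
        exact ⟨hPA hw, hvw⟩
    rw [h1, h2]
    exact erdos_gallai G (2 * k) _ P le_rfl (fun L hL =>
      path_bound G u _ hfree L hL.1 hL.2.1 (fun v hv => hPA (hL.2.2 v hv)))
  -- edges between A and B
  have hEB1 : ∑ v ∈ A, dg G B v ≤ P.card * N + (A.card - P.card) * B.card := by
    rw [← Finset.sum_sdiff hPA, add_comm]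
    have h1 : ∑ v ∈ P, dg G B v ≤ P.card * N := by
      rw [← smul_eq_mul]
      exact Finset.sum_le_card_nsmul _ _ _ hmax
    have h2 := sum_dg_le_mul G (A \ P) B
    rw [Finset.card_sdiff_of_subset hPA] at h2
    linarith
  obtain ⟨q, hq⟩ := Nat.exists_eq_add_of_le hPle
  have hF : n * n ≤ 4 * (n * n / 4) + 1 := by
    have : n * n % 4 ≤ 1 := by
      rw [Nat.mul_mod]
      have := Nat.mod_lt n (show 0 < 4 by norm_num)
      interval_cases n % 4 <;> simp
    omega
  have hF0 : A.card * (1 + B.card) ≤ n * n / 4 := by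
    rw [Nat.le_div_iff_mul_le (by norm_num)]
    rw [← hcard]
    zify
    nlinarith [sq_nonneg ((A.card : ℤ) - (B.card : ℤ) - 1)]
  have hq' : A.card - P.card = q := by omega
  rw [hq'] at hEB1
  have hNB : N ≤ B.card := dg_le _ _ _
  by_cases hcase : N + 2 * k < B.card
  · have : P.card * (N + 2 * k + 1) ≤ P.card * B.card := Nat.mul_le_mul_left _ hcase
    have h4 : A.card * (1 + B.card) = A.card + P.card * B.card + q * B.card := by
      rw [hq]; ring
    nlinarith
  by_contra hcon
  push Not at hcon
  have ha1A := hPA ha1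
  obtain ⟨a2, ha2⟩ := Finset.card_pos.1 (Finset.mem_filter.1 ha1).2
  rw [Finset.mem_filter] at ha2
  obtain ⟨ha2A, ha12⟩ := ha2
  have ha12' : a2 ∈ A.erase a1 := Finset.mem_erase.2 ⟨ha12.ne', ha2A⟩
  have ha2P : a2 ∈ P := Finset.mem_filter.2 ⟨ha2A,
    Finset.card_pos.2 ⟨a1, Finset.mem_filter.2 ⟨ha1A, ha12.symm⟩⟩⟩
  set A' := (A.erase a1).erase a2 with hA'
  have hA'c : A.card = A'.card + 2 := by
    have h1 := Finset.card_erase_add_one ha12'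
    have h2 := Finset.card_erase_add_one ha1A
    rw [hA']; omega
  have hA'A : A' ⊆ A := (Finset.erase_subset _ _).trans (Finset.erase_subset _ _)
  set X := B.filter (fun w => G.Adj a1 w) with hX
  have hXc : X.card = N := rfl
  have hXB : X ⊆ B := Finset.filter_subset _ _
  have hdXA' : Disjoint X A' := ((disj_AB G u).symm.mono_left hXB).mono_right hA'A
  have hbip : ∑ x ∈ X, dg G A' x ≤ (k - 1) * (X.card + A'.card) := by
    refine bip_bound G (k-1) _ X A' le_rfl hdXA' ?_
    intro x y p pn pc px pl py pm plen
    apply hfree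
    have pB : ∀ v ∈ x :: p, v ≠ a1 ∧ v ≠ a2 ∧ v ≠ u := by
      intro v hv
      rcases pm v hv with h | h
      · have hvB := hXB h
        refine ⟨?_, ?_, ((mem_nB G u v).1 hvB).1⟩
        · rintro rfl; exact Finset.disjoint_left.1 (disj_AB G u) ha1A hvB
        · rintro rfl; exact Finset.disjoint_left.1 (disj_AB G u) ha2A hvB
      · rw [hA', Finset.mem_erase, Finset.mem_erase] at h
        refine ⟨h.2.1, h.1, ?_⟩
        rintro rfl
        exact G.irrefl ((mem_nA G v v).1 h.2.2)
    have hau1 := (mem_nA G u a1).1 ha1A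
    have hau2 := (mem_nA G u a2).1 ha2A
    refine theta_of_list G (2*k) (a1 :: (x :: p) ++ [u]) a2 a1 u ?_ ?_ ?_ ?_ ?_ ?_ ?_ ?_ ?_
    · simp at plen ⊢; omega
    · rw [List.nodup_append]
      refine ⟨List.nodup_cons.2 ⟨fun h => (pB a1 h).1 rfl, pn⟩, by simp, ?_⟩
      intro v hv w hw
      simp only [List.mem_singleton] at hw
      subst hw
      rcases List.mem_cons.1 hv with rfl | hv
      · exact hau1.ne'
      · exact (pB v hv).2.2
    · rw [List.isChain_append]
      refine ⟨List.IsChain.cons_cons (Finset.mem_filter.1 px).2 pc, by simp, ?_⟩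
      intro v hv w hw
      rw [List.getLast?_cons_cons, pl] at hv
      simp at hv hw
      subst hv; subst hw
      exact ((mem_nA G u y).1 (hA'A py)).symm
    · intro h
      rw [List.mem_append, List.mem_cons] at h
      rcases h with (h | h) | h
      · exact ha12.ne h.symm
      · exact (pB a2 h).2.1 rfl
      · simp only [List.mem_singleton] at h
        exact hau2.ne h.symm
    · simp
    · rw [List.getLast?_append]; simp
    · exact hau1.symm
    · exact ha12.symm
    · exact hau2.symm
  have hEB2 : ∑ v ∈ A, dg G B v ≤ 2 * N + (A.card - 2) * (B.card - N)
      + (k - 1) * (N + (A.card - 2)) := by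
    have h1 := Finset.add_sum_erase A (fun v => dg G B v) ha1A
    have h2 := Finset.add_sum_erase (A.erase a1) (fun v => dg G B v) ha12'
    have h3 : dg G B a2 ≤ N := hmax a2 ha2P
    have h4 : ∑ v ∈ A', dg G B v = ∑ v ∈ A', dg G X v + ∑ v ∈ A', dg G (B \ X) v := by
      rw [← Finset.sum_add_distrib]
      apply Finset.sum_congr rfl
      intro v _
      rw [← dg_union G _ _ _ Finset.disjoint_sdiff, Finset.union_sdiff_of_subset hXB]
    have h5 := sum_dg_le_mul G A' (B \ X)
    rw [Finset.card_sdiff_of_subset hXB, hXc] at h5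
    rw [sum_dg_comm] at hbip
    rw [hXc] at hbip
    have h6 : A.card - 2 = A'.card := by omega
    rw [h6]
    simp only [← hA'] at h1 h2
    rw [← hN] at h1
    linarith
  refine numeric k n A.card B.card N (n * n / 4) hk hn (by omega) hcard hNB hF ?_ ?_
  · push Not at hcase
    have h1 : q * B.card ≤ q * (N + 2 * k) := Nat.mul_le_mul_left _ hcase
    have h2 : A.card * (1 + 2 * k + N) = A.card + P.card * N + 2 * k * P.card + q * (N + 2 * k) := by
      rw [hq]; ring
    linarith
  · have h1 : 2 * k * P.card ≤ 2 * k * A.card := Nat.mul_le_mul_left _ hPle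
    have h2 : A.card * (1 + 2 * k) = A.card + 2 * k * A.card := by ring
    linarith

end core

lemma AB_le {V : Type*} [Fintype V] (G : SimpleGraph V) (u : V) :
    (nA G u).card * (1 + (nB G u).card) ≤ Fintype.card V * Fintype.card V / 4 := by
  rw [Nat.le_div_iff_mul_le (by norm_num), ← card_AB G u]
  zify
  nlinarith [sq_nonneg (((nA G u).card : ℤ) - ((nB G u).card : ℤ) - 1)]

lemma T_le_of_indep {V : Type*} [Fintype V] (G : SimpleGraph V) (u : V)
    (h : ∀ v ∈ nA G u, dg G (nA G u) v = 0) :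
    ∑ v ∈ nA G u, dg G Finset.univ v ≤ Fintype.card V * Fintype.card V / 4 := by
  have h1 := AB_le G u
  have h2 := sum_dg_le_mul G (nA G u) (nB G u)
  rw [sum_dg_univ, Finset.sum_eq_zero h]
  linarith

lemma mem_spec_iff {n : ℕ} (G : SimpleGraph (Fin n)) (μ : ℝ) :
    μ ∈ spectrum ℝ (G.adjMatrix ℝ) ↔
      ∃ x : Fin n → ℝ, x ≠ 0 ∧ ∀ i, ∑ j ∈ nA G i, x j = μ * x i := by
  have e : ∀ (x : Fin n → ℝ) i, ((G.adjMatrix ℝ).mulVec x) i = ∑ j ∈ nA G i, x j := by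
    intro x i
    simp only [Matrix.mulVec, dotProduct, SimpleGraph.adjMatrix_apply, nA, Finset.sum_filter]
    apply Finset.sum_congr rfl
    intro j _
    split_ifs <;> simp
  rw [← Matrix.spectrum_toLin', ← Module.End.hasEigenvalue_iff_mem_spectrum]
  constructor
  · intro h
    obtain ⟨x, hx⟩ := h.exists_hasEigenvector
    refine ⟨x, hx.2, fun i => ?_⟩
    have := congrFun hx.apply_eq_smul i
    rw [Matrix.toLin'_apply, e] at this
    simpa using this
  · rintro ⟨x, hx0, hx⟩
    apply Module.End.hasEigenvalue_of_hasEigenvector (x := x)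
    refine ⟨?_, hx0⟩
    rw [Module.End.mem_eigenspace_iff]
    ext i
    rw [Matrix.toLin'_apply, e, hx]
    simp

lemma two_walk {n : ℕ} (G : SimpleGraph (Fin n)) (μ : ℝ) (x : Fin n → ℝ)
    (hx : ∀ i, ∑ j ∈ nA G i, x j = μ * x i) (u : Fin n) :
    μ ^ 2 * |x u| ≤ ∑ v ∈ nA G u, ∑ w ∈ nA G v, |x w| := by
  have h : μ ^ 2 * x u = ∑ v ∈ nA G u, ∑ w ∈ nA G v, x w := by
    simp only [hx]
    rw [← Finset.mul_sum, hx]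
    ring
  have h2 : μ ^ 2 * |x u| = |μ ^ 2 * x u| := by
    rw [abs_mul, abs_of_nonneg (sq_nonneg μ)]
  rw [h2, h]
  refine (Finset.abs_sum_le_sum_abs _ _).trans (Finset.sum_le_sum fun v _ => ?_)
  exact Finset.abs_sum_le_sum_abs _ _

lemma T_bound {n : ℕ} (G : SimpleGraph (Fin n)) (x : Fin n → ℝ) (u : Fin n) :
    ∑ v ∈ nA G u, ∑ w ∈ nA G v, |x u| = ((∑ v ∈ nA G u, dg G Finset.univ v : ℕ) : ℝ) * |x u| := by
  push_cast
  rw [Finset.sum_mul]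
  apply Finset.sum_congr rfl
  intro v _
  rw [Finset.sum_const, nsmul_eq_mul]
  rfl

lemma exists_max_abs {n : ℕ} (x : Fin n → ℝ) (hx : x ≠ 0) :
    ∃ u, 0 < |x u| ∧ ∀ w, |x w| ≤ |x u| := by
  obtain ⟨i, hi⟩ := Function.ne_iff.1 hx
  obtain ⟨u, -, hu⟩ := Finset.exists_max_image Finset.univ (fun w => |x w|) ⟨i, Finset.mem_univ i⟩
  refine ⟨u, ?_, fun w => hu w (Finset.mem_univ w)⟩
  exact lt_of_lt_of_le (abs_pos.2 hi) (hu i (Finset.mem_univ i))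

lemma spec_le {n : ℕ} (G : SimpleGraph (Fin n)) (F : ℕ)
    (hT : ∀ u, ∑ v ∈ nA G u, dg G Finset.univ v ≤ F) (μ : ℝ)
    (hμ : μ ∈ spectrum ℝ (G.adjMatrix ℝ)) : μ ≤ √F := by
  obtain ⟨x, hx0, hx⟩ := (mem_spec_iff G μ).1 hμ
  obtain ⟨u, hu, hmax⟩ := exists_max_abs x hx0
  apply Real.le_sqrt_of_sq_le
  have h1 := two_walk G μ x hx u
  have h2 : ∑ v ∈ nA G u, ∑ w ∈ nA G v, |x w| ≤ ∑ v ∈ nA G u, ∑ w ∈ nA G v, |x u| :=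
    Finset.sum_le_sum fun v _ => Finset.sum_le_sum fun w _ => hmax w
  rw [T_bound] at h2
  have h3 : ((∑ v ∈ nA G u, dg G Finset.univ v : ℕ) : ℝ) ≤ F := by exact_mod_cast hT u
  have h4 := mul_le_mul_of_nonneg_right h3 hu.le
  exact le_of_mul_le_mul_right (h1.trans (h2.trans h4)) hu

lemma rho_le {n : ℕ} (G : SimpleGraph (Fin n)) (F : ℕ)
    (hT : ∀ u, ∑ v ∈ nA G u, dg G Finset.univ v ≤ F) : adjSpectralRadius G ≤ √F :=
  Real.sSup_le (fun μ hμ => spec_le G F hT μ hμ) (Real.sqrt_nonneg _)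

lemma rho_mem {n : ℕ} (G : SimpleGraph (Fin n)) (h : 0 < adjSpectralRadius G) :
    adjSpectralRadius G ∈ spectrum ℝ (G.adjMatrix ℝ) := by
  have hne : (spectrum ℝ (G.adjMatrix ℝ)).Nonempty := by
    by_contra hcon
    rw [Set.not_nonempty_iff_eq_empty] at hcon
    rw [adjSpectralRadius, hcon, Real.sSup_empty] at h
    exact lt_irrefl _ h
  exact hne.csSup_mem (Matrix.finite_spectrum _)

/-- Equality analysis. -/
lemma max_vertex {n : ℕ} (G : SimpleGraph (Fin n)) (F : ℕ) (hF : 0 < F)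
    (hT : ∀ u, ∑ v ∈ nA G u, dg G Finset.univ v ≤ F) (x : Fin n → ℝ)
    (hx : ∀ i, ∑ j ∈ nA G i, x j = √F * x i) (u : Fin n) (hu : 0 < |x u|)
    (hmax : ∀ w, |x w| ≤ |x u|) :
    ∑ v ∈ nA G u, dg G Finset.univ v = F ∧ ∀ v ∈ nA G u, ∀ w ∈ nA G v, |x w| = |x u| := by
  have h1 := two_walk G _ x hx u
  rw [Real.sq_sqrt (Nat.cast_nonneg F)] at h1
  have h2 : ∀ v ∈ nA G u, ∑ w ∈ nA G v, |x w| ≤ ∑ w ∈ nA G v, |x u| :=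
    fun v _ => Finset.sum_le_sum fun w _ => hmax w
  have h2' := Finset.sum_le_sum h2
  have hTb := T_bound G x u
  have h3 : ((∑ v ∈ nA G u, dg G Finset.univ v : ℕ) : ℝ) ≤ F := by exact_mod_cast hT u
  have h4 := mul_le_mul_of_nonneg_right h3 hu.le
  constructor
  · have h5 : (F : ℝ) * |x u| ≤ ((∑ v ∈ nA G u, dg G Finset.univ v : ℕ) : ℝ) * |x u| := by
      rw [← hTb]; exact h1.trans h2'
    have h6 := le_of_mul_le_mul_right h5 hu
    exact le_antisymm (hT u) (by exact_mod_cast h6)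
  · have h5 : ∑ v ∈ nA G u, ∑ w ∈ nA G v, |x w| = ∑ v ∈ nA G u, ∑ w ∈ nA G v, |x u| := by
      linarith
    intro v hv w hw
    have h6 := (Finset.sum_eq_sum_iff_of_le h2).1 h5 v hv
    exact (Finset.sum_eq_sum_iff_of_le (fun w _ => hmax w)).1 h6 w hw

lemma evens_card (n : ℕ) :
    (Finset.univ.filter (fun i : Fin n => i.val % 2 = 0)).card = (n + 1) / 2 := by
  rw [Finset.card_filter, Fin.sum_univ_eq_sum_range (fun i => if i % 2 = 0 then 1 else 0)]
  induction n with
  | zero => simp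
  | succ n ih =>
    rw [Finset.sum_range_succ, ih]
    split_ifs <;> omega

lemma odds_card (n : ℕ) :
    (Finset.univ.filter (fun i : Fin n => ¬ i.val % 2 = 0)).card = n / 2 := by
  have h := Finset.card_filter_add_card_filter_not (s := Finset.univ)
    (fun i : Fin n => i.val % 2 = 0)
  rw [evens_card, Finset.card_univ, Fintype.card_fin] at h
  omega

lemma half_mul (n : ℕ) : ((n + 1) / 2) * (n / 2) = n * n / 4 := by
  rcases Nat.even_or_odd' n with ⟨m, rfl | rfl⟩
  · have h1 : (2 * m + 1) / 2 = m := by omega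
    have h2 : 2 * m / 2 = m := by omega
    have h3 : 2 * m * (2 * m) = 4 * (m * m) := by ring
    rw [h1, h2, h3]; omega
  · have h1 : (2 * m + 1 + 1) / 2 = m + 1 := by omega
    have h2 : (2 * m + 1) / 2 = m := by omega
    have h3 : (2 * m + 1) * (2 * m + 1) = 4 * ((m + 1) * m) + 1 := by ring
    rw [h1, h2, h3]; omega

lemma turan_adj (n : ℕ) (i j : Fin n) :
    (turanGraph n 2).Adj i j ↔ i.val % 2 ≠ j.val % 2 := Iff.rfl

lemma dg_zero {V : Type*} (G : SimpleGraph V) (S : Finset V) (v : V)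
    (h : ∀ w ∈ S, ¬ G.Adj v w) : dg G S v = 0 := by
  rw [dg, Finset.card_eq_zero, Finset.filter_eq_empty_iff]
  intro w hw
  exact h w hw

lemma rho_ge {n : ℕ} (G : SimpleGraph (Fin n)) (μ : ℝ)
    (h : ∃ x : Fin n → ℝ, x ≠ 0 ∧ ∀ i, ∑ j ∈ nA G i, x j = μ * x i) :
    μ ≤ adjSpectralRadius G :=
  le_csSup (Matrix.finite_spectrum _).bddAbove ((mem_spec_iff G μ).2 h)

lemma turan_T (n : ℕ) (u : Fin n) :
    ∑ v ∈ nA (turanGraph n 2) u, dg (turanGraph n 2) Finset.univ v ≤ n * n / 4 := by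
  have := T_le_of_indep (turanGraph n 2) u (by
    intro v hv
    apply dg_zero
    intro w hw h
    rw [mem_nA, turan_adj] at hv hw
    rw [turan_adj] at h
    omega)
  simpa using this

lemma turan_rho (n : ℕ) (hn : 2 ≤ n) :
    adjSpectralRadius (turanGraph n 2) = √((n * n / 4 : ℕ) : ℝ) := by
  apply le_antisymm (rho_le _ _ (turan_T n))
  · apply rho_ge
    refine ⟨fun i => if i.val % 2 = 0 then √((n / 2 : ℕ) : ℝ) else √(((n + 1) / 2 : ℕ) : ℝ), ?_, ?_⟩
    · intro h
      have := congrFun h ⟨0, by omega⟩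
      simp at this
      omega
    · intro i
      rw [← half_mul, Nat.cast_mul, Real.sqrt_mul (Nat.cast_nonneg _)]
      by_cases hi : i.val % 2 = 0
      · have e : nA (turanGraph n 2) i = Finset.univ.filter (fun i : Fin n => ¬ i.val % 2 = 0) := by
          ext j; rw [mem_nA, turan_adj, Finset.mem_filter]; simp; omega
        rw [e, Finset.sum_congr rfl (g := fun _ => √(((n + 1) / 2 : ℕ) : ℝ))
          (fun j hj => if_neg (Finset.mem_filter.1 hj).2), Finset.sum_const, odds_card]
        simp only [if_pos hi]
        rw [nsmul_eq_mul, mul_assoc, Real.mul_self_sqrt (Nat.cast_nonneg _), mul_comm]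
      · have e : nA (turanGraph n 2) i = Finset.univ.filter (fun i : Fin n => i.val % 2 = 0) := by
          ext j; rw [mem_nA, turan_adj, Finset.mem_filter]; simp; omega
        rw [e, Finset.sum_congr rfl (g := fun _ => √((n / 2 : ℕ) : ℝ))
          (fun j hj => if_pos (Finset.mem_filter.1 hj).2), Finset.sum_const, evens_card]
        simp only [if_neg hi]
        rw [nsmul_eq_mul, mul_right_comm, Real.mul_self_sqrt (Nat.cast_nonneg _)]

lemma rho_iso {n : ℕ} (G H : SimpleGraph (Fin n)) (e : G ≃g H) :
    adjSpectralRadius G = adjSpectralRadius H := by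
  have key : ∀ (G H : SimpleGraph (Fin n)) (e : G ≃g H) (μ : ℝ),
      μ ∈ spectrum ℝ (G.adjMatrix ℝ) → μ ∈ spectrum ℝ (H.adjMatrix ℝ) := by
    intro G H e μ h
    rw [mem_spec_iff] at h ⊢
    obtain ⟨x, hx0, hx⟩ := h
    refine ⟨fun i => x (e.symm i), ?_, ?_⟩
    · intro h
      apply hx0
      ext i
      have := congrFun h (e i)
      simpa using this
    · intro i
      rw [← hx (e.symm i)]
      refine Finset.sum_bij (fun j _ => e.symm j) ?_ ?_ ?_ ?_
      · intro j hj; rw [mem_nA] at hj ⊢; exact e.symm.map_adj_iff.2 hj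
      · intro a _ b _ h; exact e.symm.injective h
      · intro b hb
        refine ⟨e b, ?_, by simp⟩
        rw [mem_nA] at hb ⊢
        have := e.map_adj_iff.2 hb
        simpa using this
      · intro j _; rfl
  unfold adjSpectralRadius
  congr 1
  ext μ
  exact ⟨key G H e μ, key H G e.symm μ⟩

lemma iso_of_split {n : ℕ} (G : SimpleGraph (Fin n)) (p : Fin n → Prop)
    (hp : (Finset.univ.filter p).card = (n + 1) / 2)
    (hadj : ∀ i j, G.Adj i j ↔ ¬ (p i ↔ p j)) : Nonempty (G ≃g turanGraph n 2) := by
  let q : Fin n → Prop := fun i => i.val % 2 = 0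
  have hc : Fintype.card {i // p i} = Fintype.card {i // q i} := by
    rw [Fintype.card_subtype, Fintype.card_subtype, hp]
    exact (evens_card n).symm
  let e0 : {i // p i} ≃ {i // q i} := Fintype.equivOfCardEq hc
  let e : Fin n ≃ Fin n := e0.extendSubtype
  have he : ∀ i, q (e i) ↔ p i := by
    intro i
    by_cases h : p i
    · simp only [h, iff_true]; exact Equiv.extendSubtype_mem e0 i h
    · simp only [h, iff_false]; exact Equiv.extendSubtype_not_mem e0 i h
  refine ⟨⟨e, ?_⟩⟩
  intro i j
  rw [turan_adj, hadj, ← he i, ← he j]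
  simp only [q]
  omega

lemma eq_case {n : ℕ} (G : SimpleGraph (Fin n)) (hn : 2 ≤ n)
    (hT : ∀ u, ∑ v ∈ nA G u, dg G Finset.univ v ≤ n * n / 4)
    (hcore : ∀ u, ∑ v ∈ nA G u, dg G Finset.univ v = n * n / 4 →
      ∀ v ∈ nA G u, dg G (nA G u) v = 0)
    (heq : adjSpectralRadius G = √((n * n / 4 : ℕ) : ℝ)) : Nonempty (G ≃g turanGraph n 2) := by
  have hF : 0 < n * n / 4 := Nat.div_pos (by nlinarith) (by norm_num)
  have hpos : 0 < adjSpectralRadius G := by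
    rw [heq]; exact Real.sqrt_pos.2 (by exact_mod_cast hF)
  have hm := rho_mem G hpos
  rw [heq, mem_spec_iff] at hm
  obtain ⟨x, hx0, hx⟩ := hm
  obtain ⟨u, hu, hmax⟩ := exists_max_abs x hx0
  obtain ⟨hTu, hwalk⟩ := max_vertex G _ hF hT x hx u hu hmax
  have hind := hcore u hTu
  have hAB := AB_le G u
  rw [Fintype.card_fin] at hAB
  rw [sum_dg_univ, Finset.sum_eq_zero hind] at hTu
  have hle : ∀ v ∈ nA G u, dg G (nB G u) v ≤ (nB G u).card := fun v _ => dg_le _ _ _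
  have hsumle := Finset.sum_le_sum hle
  have hconst : ∑ v ∈ nA G u, (nB G u).card = (nA G u).card * (nB G u).card := by simp
  have hsum : ∑ v ∈ nA G u, dg G (nB G u) v = ∑ v ∈ nA G u, (nB G u).card := by
    rw [hconst] at hsumle ⊢
    nlinarith
  have hαβ : (nA G u).card * (1 + (nB G u).card) = n * n / 4 := by
    rw [hsum, hconst] at hTu
    linarith
  have hfull : ∀ v ∈ nA G u, ∀ w ∈ nB G u, G.Adj v w := by
    intro v hv w hw
    have h1 := (Finset.sum_eq_sum_iff_of_le hle).1 hsum v hv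
    exact Finset.card_filter_eq_iff.1 h1 w hw
  have hApos : 0 < (nA G u).card := by
    rcases Nat.eq_zero_or_pos (nA G u).card with h | h
    · rw [h] at hαβ; omega
    · exact h
  obtain ⟨v0, hv0⟩ := Finset.card_pos.1 hApos
  have hindA : ∀ v ∈ nA G u, ∀ w ∈ nA G u, ¬ G.Adj v w := by
    intro v hv w hw h
    have := hind v hv
    rw [dg, Finset.card_eq_zero, Finset.filter_eq_empty_iff] at this
    exact this hw h
  have hindB : ∀ b ∈ nB G u, ∀ b' ∈ nB G u, ¬ G.Adj b b' := by
    intro b hb b' hb' h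
    have hxb : |x b| = |x u| := hwalk v0 hv0 b ((mem_nA G v0 b).2 (hfull v0 hv0 b hb))
    obtain ⟨hTb, -⟩ := max_vertex G _ hF hT x hx b (by rw [hxb]; exact hu)
      (fun w => by rw [hxb]; exact hmax w)
    have := hcore b hTb b' ((mem_nA G b b').2 h)
    rw [dg, Finset.card_eq_zero, Finset.filter_eq_empty_iff] at this
    exact this ((mem_nA G b v0).2 (hfull v0 hv0 b hb).symm) (hfull v0 hv0 b' hb').symm
  have hadj : ∀ i j, G.Adj i j ↔ ¬ (i ∈ nA G u ↔ j ∈ nA G u) := by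
    intro i j
    have hcls : ∀ i, i ∉ nA G u → i = u ∨ i ∈ nB G u := by
      intro i hi
      rw [mem_nA] at hi
      rw [mem_nB]
      tauto
    by_cases hi : i ∈ nA G u <;> by_cases hj : j ∈ nA G u
    · simp [hi, hj, hindA i hi j hj]
    · simp only [hi, hj, iff_false, not_true_eq_false, not_false_eq_true, iff_true]
      rcases hcls j hj with rfl | hj'
      · exact ((mem_nA G j i).1 hi).symm
      · exact hfull i hi j hj'
    · simp only [hi, hj, iff_true, not_false_eq_true]
      rcases hcls i hi with rfl | hi'
      · exact (mem_nA G i j).1 hj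
      · exact (hfull j hj i hi').symm
    · simp only [hi, hj, not_true_eq_false, iff_false]
      intro h
      rcases hcls i hi with rfl | hi'
      · exact hj ((mem_nA G i j).2 h)
      · rcases hcls j hj with rfl | hj'
        · exact hi ((mem_nA G j i).2 h.symm)
        · exact hindB i hi' j hj' h
  have hcard := card_AB G u
  rw [Fintype.card_fin] at hcard
  rw [← half_mul] at hαβ
  have hor : (nA G u).card = (n + 1) / 2 ∨ (nA G u).card = n / 2 := by
    have h1 : (n + 1) / 2 + n / 2 = n := by omega
    have h2 : 1 + (nB G u).card = (n + 1) / 2 + n / 2 - (nA G u).card := by omega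
    have h3 : (nA G u).card ≤ (n + 1) / 2 + n / 2 := by omega
    rw [h2] at hαβ
    generalize (nA G u).card = a at *
    generalize (n + 1) / 2 = s at *
    generalize n / 2 = t at *
    zify [h3] at hαβ ⊢
    have : ((a : ℤ) - s) * (a - t) = 0 := by linarith
    rcases mul_eq_zero.1 this with h | h
    · left; linarith
    · right; linarith
  rcases hor with h | h
  · refine iso_of_split G (fun i => i ∈ nA G u) ?_ hadj
    rw [← h]; congr 1; ext i; simp
  · refine iso_of_split G (fun i => i ∉ nA G u) ?_ ?_
    · have h1 := Finset.card_compl (nA G u)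
      rw [Fintype.card_fin] at h1
      trans ((nA G u)ᶜ).card
      · congr 1; ext i; simp
      · rw [h1]; omega
    · intro i j; rw [hadj i j, not_iff_not (a := i ∈ nA G u)]


/-- Theorem 1.7, even case: for even `r ≥ 2` and `n ≥ 7r`, the unique spectral extremal
`θ_{r+1}`-free graph on `n` vertices is `T_{n,2}`. -/
theorem stmt4 (r n : ℕ) (hr : 2 ≤ r) (heven : Even r) (hn : 7 * r ≤ n)
    (G : SimpleGraph (Fin n)) (hfree : ¬ Contains G (theta r)) :
    adjSpectralRadius G ≤ adjSpectralRadius (turanGraph n 2) ∧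
    (adjSpectralRadius G = adjSpectralRadius (turanGraph n 2) ↔
      Nonempty (G ≃g turanGraph n 2)) := by
  obtain ⟨k, hk⟩ := heven
  obtain rfl : r = 2 * k := by omega
  have hcore : ∀ u, ∑ v ∈ nA G u, dg G Finset.univ v = n * n / 4 →
      ∀ v ∈ nA G u, dg G (nA G u) v = 0 := by
    intro u hu v hv
    by_contra h
    have := core G u k (by omega) (by rw [Fintype.card_fin]; omega) hfree v hv
      (Nat.pos_of_ne_zero h)
    rw [Fintype.card_fin] at this
    omega
  have hT : ∀ u, ∑ v ∈ nA G u, dg G Finset.univ v ≤ n * n / 4 := by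
    intro u
    by_cases h : ∀ v ∈ nA G u, dg G (nA G u) v = 0
    · simpa using T_le_of_indep G u h
    · push Not at h
      obtain ⟨v, hv, hd⟩ := h
      have := core G u k (by omega) (by rw [Fintype.card_fin]; omega) hfree v hv
        (Nat.pos_of_ne_zero hd)
      rw [Fintype.card_fin] at this
      omega
  have hρ := turan_rho n (by omega)
  refine ⟨?_, ?_, ?_⟩
  · rw [hρ]; exact rho_le G _ hT
  · intro h
    rw [hρ] at h
    exact eq_case G (by omega) hT hcore h
  · rintro ⟨e⟩
    exact rho_iso _ _ e
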